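/- Let Â = A + εB be an n×n dual matrix possessing a dual core generalized inverse Ĝ, let C be a core inverse of A, and let P be the Moore–Penrose inverse of A. Then Ĝ = C − ε·C·B·C if and only if rank(A²) = rank(A) and (Iₙ − A·P)·B = 0. -/

import Mathlib

open Matrix

/-- The dual matrix `A + εB`, viewed as a matrix over the dual numbers `ℝ[ε]`. -/
def dm {n : ℕ} (A B : Matrix (Fin n) (Fin n) ℝ) :
    Matrix (Fin n) (Fin n) (DualNumber ℝ) :=
  fun i j => TrivSqZeroExt.inl (A i j) + TrivSqZeroExt.inr (B i j)

/-- A dual matrix has dual index one iff its column space equals that of its square,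
equivalently (as shown in the paper) there is a dual matrix `X` with `M² * X = M`. -/
def DualIndexOne {n : ℕ} (M : Matrix (Fin n) (Fin n) (DualNumber ℝ)) : Prop :=
  ∃ X : Matrix (Fin n) (Fin n) (DualNumber ℝ), M * M * X = M

/-- `G` is a group inverse of the real matrix `A`. -/
def IsGroupInv {n : ℕ} (A G : Matrix (Fin n) (Fin n) ℝ) : Prop :=
  A * G * A = A ∧ G * A * G = G ∧ A * G = G * A

/-- `X` is the Moore–Penrose inverse of the real matrix `A`. -/
def IsMoorePenrose {n : ℕ} (A X : Matrix (Fin n) (Fin n) ℝ) : Prop :=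
  A * X * A = A ∧ X * A * X = X ∧ (A * X)ᵀ = A * X ∧ (X * A)ᵀ = X * A

/-- `C` is a core inverse of the real matrix `A`. -/
def IsCoreInv {n : ℕ} (A C : Matrix (Fin n) (Fin n) ℝ) : Prop :=
  A * C * A = A ∧ A * (C * C) = C ∧ (A * C)ᵀ = A * C

/-- `G` is a dual group generalized inverse (DGGI) of the dual matrix `M`. -/
def IsDGGI {n : ℕ} (M G : Matrix (Fin n) (Fin n) (DualNumber ℝ)) : Prop :=
  M * G * M = M ∧ G * M * G = G ∧ M * G = G * M

/-- `X` is a dual Moore–Penrose generalized inverse (DMPGI) of the dual matrix `M`. -/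
def IsDMPGI {n : ℕ} (M X : Matrix (Fin n) (Fin n) (DualNumber ℝ)) : Prop :=
  M * X * M = M ∧ X * M * X = X ∧ (M * X)ᵀ = M * X ∧ (X * M)ᵀ = X * M

/-- `G` is a dual core generalized inverse (DCGI) of the dual matrix `M`. -/
def IsDCGI {n : ℕ} (M G : Matrix (Fin n) (Fin n) (DualNumber ℝ)) : Prop :=
  M * G * M = M ∧ M * (G * G) = G ∧ (M * G)ᵀ = M * G

/-
All `{1,3}`-inverses `x` of `a` give the same projection `ax`, so `1 - AP = 1 - AC`, and core
inverses are unique, so the question is when `C - εCBC` is a core inverse of `A + εB`. The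
`ε`-part of the equation `ĉâ² = â` for this candidate reads `CAB = B`, which is equivalent to
`ACB = B`, and under `ACB = B` the product `(A + εB)(C - εCBC)` collapses to `AC`, which makes
the other two equations those of `C`. The rank condition holds as soon as `C` exists, since
`A = CA²`.
-/

section IsDedekindFiniteMonoid

variable {R : Type*} [Ring R] [IsDedekindFiniteMonoid R] {a c : R}

theorem sq_mul_of_inner_of_mul_sq (hinner : a * c * a = a) (hsq : a * (c * c) = c) :
    c * (a * a) = a := by
  have hproj_a : (1 - a * c) * a = 0 := by rw [sub_mul, one_mul, hinner, sub_self]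
  have hproj_c : (1 - a * c) * c = 0 := by rw [sub_mul, one_mul, mul_assoc, hsq, sub_self]
  have hca : a * (1 - c * a) = 0 := by rw [mul_sub, mul_one, ← mul_assoc, hinner, sub_self]
  have habsorb : (1 - a * c) * (1 - c * a) = 1 - a * c := by
    rw [mul_sub, mul_one, ← mul_assoc, hproj_c, zero_mul, sub_zero]
  have hidem : (1 - a * c) * (1 - a * c) = 1 - a * c := by
    rw [mul_sub, mul_one, ← mul_assoc, hproj_a, zero_mul, sub_zero]
  -- `a + (1 - a * c)` acts on `a` as `a` does, and it has a right, hence also a left, inverse.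
  have hright : (a + (1 - a * c)) * (c + (1 - c * a) * (1 - a * c)) = 1 := by
    rw [add_mul, mul_add, mul_add, ← mul_assoc a, hca, hproj_c, ← mul_assoc, habsorb, hidem,
      zero_mul, add_zero, zero_add, add_sub_cancel]
  have hleft := mul_eq_one_comm.mp hright
  calc c * (a * a) = (c + (1 - c * a) * (1 - a * c)) * (a * a) := by
        rw [add_mul, mul_assoc (1 - c * a), ← mul_assoc (1 - a * c), hproj_a, zero_mul, mul_zero,
          add_zero]
    _ = (c + (1 - c * a) * (1 - a * c)) * ((a + (1 - a * c)) * a) := by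
        rw [add_mul a, hproj_a, add_zero]
    _ = a := by rw [← mul_assoc, hleft, one_mul]

end IsDedekindFiniteMonoid

section StarRing

variable {R : Type*} [Ring R] [StarRing R]

/-- `x` is a `{1,3}`-inverse of `a`: it satisfies the first and the third Penrose equation. Both
core inverses and Moore–Penrose inverses are of this kind. -/
structure IsOneThreeInverse (a x : R) : Prop where
  inner : a * x * a = a
  isSelfAdjoint : IsSelfAdjoint (a * x)

/-- `c` is the core inverse of `a` in a ring with involution, characterised by
`(ac)* = ac`, `ac² = c`, `ca² = a`. In contrast to `IsCoreInv` it has `ca² = a` in place of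
`aca = a`, so that `c` is unique in every ring with involution, Dedekind-finite or not. -/
structure IsCoreInverse (a c : R) : Prop where
  isSelfAdjoint : IsSelfAdjoint (a * c)
  mul_sq : a * (c * c) = c
  sq_mul : c * (a * a) = a

variable {a b c d p x y : R}

theorem IsOneThreeInverse.mul_eq_mul (hx : IsOneThreeInverse a x) (hy : IsOneThreeInverse a y) :
    a * x = a * y :=
  calc a * x = star (a * y * (a * x)) := by rw [← mul_assoc, hy.inner, hx.isSelfAdjoint.star_eq]
    _ = a * x * (a * y) := by rw [star_mul, hx.isSelfAdjoint.star_eq, hy.isSelfAdjoint.star_eq]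
    _ = a * y := by rw [← mul_assoc, hx.inner]

namespace IsCoreInverse

theorem of_inner [IsDedekindFiniteMonoid R] (hinner : a * c * a = a) (hsq : a * (c * c) = c)
    (hself : IsSelfAdjoint (a * c)) : IsCoreInverse a c :=
  ⟨hself, hsq, sq_mul_of_inner_of_mul_sq hinner hsq⟩

theorem inner (hc : IsCoreInverse a c) : a * c * a = a :=
  calc a * c * a = a * c * (c * (a * a)) := by rw [hc.sq_mul]
    _ = a * (c * c) * (a * a) := by simp only [mul_assoc]
    _ = a := by rw [hc.mul_sq, hc.sq_mul]

theorem isOneThreeInverse (hc : IsCoreInverse a c) : IsOneThreeInverse a c :=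
  ⟨hc.inner, hc.isSelfAdjoint⟩

theorem mul_mul_eq (hc : IsCoreInverse a c) (hd : IsCoreInverse a d) : c * (a * d) = d :=
  calc c * (a * d) = c * (a * (a * (d * d))) := by rw [hd.mul_sq]
    _ = c * (a * a) * (d * d) := by simp only [mul_assoc]
    _ = d := by rw [hc.sq_mul, hd.mul_sq]

theorem unique (hc : IsCoreInverse a c) (hd : IsCoreInverse a d) : c = d :=
  calc c = c * (a * c) := (hc.mul_mul_eq hc).symm
    _ = c * (a * d) := by rw [hc.isOneThreeInverse.mul_eq_mul hd.isOneThreeInverse]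
    _ = d := hc.mul_mul_eq hd

end IsCoreInverse

open TrivSqZeroExt

/-- The involution `(a + εb)* = a* + εb*` on the dual numbers over a ring with involution. -/
instance instStarRingDualNumber : StarRing (DualNumber R) where
  star z := inl (star z.fst) + inr (star z.snd)
  star_involutive z := by ext <;> simp
  star_mul z w := by ext <;> simp [add_comm]
  star_add z w := by ext <;> simp

theorem dualNumber_fst_star (z : DualNumber R) : (star z).fst = star z.fst := by
  simp [star]

theorem dualNumber_snd_star (z : DualNumber R) : (star z).snd = star z.snd := by
  simp [star]

theorem dualNumber_star_inl (x : R) : star (inl x : DualNumber R) = inl (star x) := by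
  simp [star]

namespace IsCoreInverse

theorem inl_sub_inr_mul_sq (hc : IsCoreInverse a c) :
    (inl c - inr (c * b * c) : DualNumber R) * ((inl a + inr b) * (inl a + inr b)) =
      inl a + inr (c * (a * b)) := by
  have hcancel : c * b * c * (a * a) = c * (b * a) := by rw [mul_assoc, hc.sq_mul, mul_assoc]
  ext
  · simp [hc.sq_mul]
  · simp [mul_add, hcancel]

theorem inl_add_inr (hc : IsCoreInverse a c) (hb : a * c * b = b) :
    IsCoreInverse (inl a + inr b : DualNumber R) (inl c - inr (c * b * c)) := by
  have hmul : (inl a + inr b : DualNumber R) * (inl c - inr (c * b * c)) = inl (a * c) := by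
    ext
    · simp
    · simp [← mul_assoc, hb]
  refine ⟨?_, ?_, ?_⟩
  · rw [hmul, isSelfAdjoint_iff, dualNumber_star_inl, hc.isSelfAdjoint.star_eq]
  · have hacc : a * c * c = c := by rw [mul_assoc, hc.mul_sq]
    rw [← mul_assoc, hmul, mul_sub, inl_mul_inl, inl_mul_inr, smul_eq_mul, hacc, mul_assoc c,
      ← mul_assoc (a * c), hacc]
  · have hcab : c * (a * b) = b := by
      rw [← hb, mul_assoc, ← mul_assoc a a, ← mul_assoc c, hc.sq_mul]
    rw [hc.inl_sub_inr_mul_sq, hcab]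

theorem inl_add_inr_iff (hc : IsCoreInverse a c) :
    IsCoreInverse (inl a + inr b : DualNumber R) (inl c - inr (c * b * c)) ↔
      (1 - a * c) * b = 0 := by
  rw [sub_mul, one_mul, sub_eq_zero, eq_comm (a := b)]
  refine ⟨fun h => ?_, hc.inl_add_inr⟩
  have hcab : c * (a * b) = b := by
    simpa using congrArg snd (hc.inl_sub_inr_mul_sq.symm.trans h.sq_mul)
  rw [← hcab, ← mul_assoc, mul_assoc a, hc.mul_sq]

end IsCoreInverse

theorem stmt15_general {g : DualNumber R} (hg : IsCoreInverse (inl a + inr b) g)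
    (hc : IsCoreInverse a c) (hp : IsOneThreeInverse a p) :
    g = inl c - inr (c * b * c) ↔ (1 - a * p) * b = 0 := by
  rw [hp.mul_eq_mul hc.isOneThreeInverse, ← hc.inl_add_inr_iff]
  exact ⟨fun h => h ▸ hg, hg.unique⟩

end StarRing

theorem IsCoreInverse.rank_mul_self {m R : Type*} [Fintype m] [DecidableEq m] [CommRing R]
    [StarRing R] [StrongRankCondition R] {A C : Matrix m m R} (hC : IsCoreInverse A C) :
    (A * A).rank = A.rank := by
  refine le_antisymm (rank_mul_le_left A A) ?_
  simpa only [hC.sq_mul] using rank_mul_le_right C (A * A)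

theorem star_dualNumberEquiv {m R : Type} [Fintype m] [DecidableEq m] [CommRing R]
    [StarRing R] [TrivialStar R] (M : Matrix m m (DualNumber R)) :
    star (dualNumberEquiv M) = dualNumberEquiv Mᵀ := by
  ext i j
  · rw [dualNumber_fst_star]
    simp
  · rw [dualNumber_snd_star]
    simp

theorem isSelfAdjoint_iff_transpose_eq {m R : Type*} [Star R] [TrivialStar R] {A : Matrix m m R} :
    IsSelfAdjoint A ↔ Aᵀ = A := by
  rw [isSelfAdjoint_iff, star_eq_conjTranspose, conjTranspose_eq_transpose_of_trivial]

section RealMatrix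

variable {n : ℕ} {A B C P : Matrix (Fin n) (Fin n) ℝ}
  {M G : Matrix (Fin n) (Fin n) (DualNumber ℝ)}

theorem IsCoreInv.isCoreInverse (hC : IsCoreInv A C) : IsCoreInverse A C :=
  .of_inner hC.1 hC.2.1 (isSelfAdjoint_iff_transpose_eq.mpr hC.2.2)

theorem IsMoorePenrose.isOneThreeInverse (hP : IsMoorePenrose A P) : IsOneThreeInverse A P :=
  ⟨hP.1, isSelfAdjoint_iff_transpose_eq.mpr hP.2.2.1⟩

theorem IsDCGI.isCoreInverse (hG : IsDCGI M G) :
    IsCoreInverse (dualNumberEquiv M) (dualNumberEquiv G) := by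
  obtain ⟨hinner, hsq, hsymm⟩ := hG
  refine ⟨?_, ?_, ?_⟩
  · rw [← map_mul, isSelfAdjoint_iff, star_dualNumberEquiv, hsymm]
  · rw [← map_mul, ← map_mul, hsq]
  · rw [← map_mul, ← map_mul, sq_mul_of_inner_of_mul_sq hinner hsq]

open TrivSqZeroExt

theorem dualNumberEquiv_dm (A B : Matrix (Fin n) (Fin n) ℝ) :
    dualNumberEquiv (dm A B) = inl A + inr B := by
  ext i j <;> simp [dm]

theorem eq_dm_neg_iff : G = dm A (-B) ↔ dualNumberEquiv G = inl A - inr B := by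
  rw [← dualNumberEquiv.injective.eq_iff, dualNumberEquiv_dm, inr_neg, sub_eq_add_neg]

end RealMatrix

theorem stmt15 {n : ℕ} (A B C P : Matrix (Fin n) (Fin n) ℝ)
    (G : Matrix (Fin n) (Fin n) (DualNumber ℝ))
    (hG : IsDCGI (dm A B) G) (hC : IsCoreInv A C) (hP : IsMoorePenrose A P) :
    G = dm C (-(C * B * C)) ↔
      (A * A).rank = A.rank ∧ (1 - A * P) * B = 0 := by
  rw [eq_dm_neg_iff, and_iff_right hC.isCoreInverse.rank_mul_self]
  exact stmt15_general (dualNumberEquiv_dm A B ▸ hG.isCoreInverse) hC.isCoreInverse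
    hP.isOneThreeInverse
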